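/- Let N ≥ 3, α ∈ (0, N), b > −(N−2)²/4 and (N+α)/N < p < 1 + (2+α)/N. Then for all M₀ > 0 and E₀ ∈ ℝ there exists B > 0 such that every smooth compactly supported u : ℝ^N → ℂ satisfying ∫ |u|² dx ≤ M₀² and (1/2) ∫ ( |∇u|² + b |u|²/|x|² ) dx − (1/(2p)) ∫ (I_α ∗ |u|^p) |u|^p dx ≤ E₀ obeys ∫ ( |∇u|² + b |u|²/|x|² ) dx ≤ B. -/

import Mathlib

open MeasureTheory Real
open scoped BigOperators

/-- The squared Euclidean norm of the gradient: `∑ i |∂ᵢ u(x)|²`. -/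
noncomputable def gradSq {N : ℕ} {F : Type*} [NormedAddCommGroup F] [NormedSpace ℝ F]
    (u : EuclideanSpace ℝ (Fin N) → F) (x : EuclideanSpace ℝ (Fin N)) : ℝ :=
  ∑ i, ‖fderiv ℝ u x (EuclideanSpace.single i 1)‖ ^ 2

/-- The normalization constant `𝒜 = Γ((N−α)/2) / (Γ(α/2) π^{N/2} 2^α)` of
the Riesz potential `I_α(x) = 𝒜 |x|^{α−N}`. -/
noncomputable def rieszConst (N : ℕ) (α : ℝ) : ℝ :=
  Real.Gamma (((N : ℝ) - α) / 2) /
    (Real.Gamma (α / 2) * Real.pi ^ ((N : ℝ) / 2) * 2 ^ α)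

/-- The Riesz convolution `(I_α ∗ |u|^p)(x) = ∫ I_α(x−y) |u(y)|^p dy`. -/
noncomputable def rieszConv (N : ℕ) (α p : ℝ) (u : EuclideanSpace ℝ (Fin N) → ℂ)
    (x : EuclideanSpace ℝ (Fin N)) : ℝ :=
  ∫ y, rieszConst N α * ‖x - y‖ ^ (α - (N : ℝ)) * ‖u y‖ ^ p

/-- The Choquard nonlocal term `∫ (I_α ∗ |u|^p)(x) |u(x)|^p dx`. -/
noncomputable def choquardTerm (N : ℕ) (α p : ℝ)
    (u : EuclideanSpace ℝ (Fin N) → ℂ) : ℝ :=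
  ∫ x, rieszConv N α p u x * ‖u x‖ ^ p

/-- The `H¹` norm `(∫ (|u|² + |∇u|²))^{1/2}`. -/
noncomputable def H1Norm {N : ℕ} (u : EuclideanSpace ℝ (Fin N) → ℂ) : ℝ :=
  Real.sqrt (∫ x, (‖u x‖ ^ 2 + gradSq u x))

/-!
Put `θ₀ = (N (p - 1) - α) / 2`. The bounds on `p` say exactly that `0 < θ₀ < 1`, and scaling
suggests that the Choquard term is controlled by the power `θ₀` of the Dirichlet energy when the
mass is bounded. Instead of proving this through the Hardy–Littlewood–Sobolev inequality, cut the
Riesz kernel `|z|^(α - N)` at `|z| = 1`: the near part lies in `L^r` for `r` slightly below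
`N / (N - α)`, the far part for `r` slightly above. Young's convolution inequality and
Gagliardo–Nirenberg then bound the two contributions by powers slightly above and slightly below
`θ₀`, both still in `(0, 1)`. By the weighted AM–GM inequality the Choquard term is therefore at
most `ε ∫ |∇u|² + B` with `ε` arbitrarily small. Hardy's inequality makes the quadratic form control
`∫ |∇u|²`, so this term can be absorbed.
-/

open scoped NNReal ENNReal

section Young

theorem rpow_mul_rpow_mul_rpow_eq (x y z : ℝ≥0∞) {a b c : ℝ} (ha : a ≤ 1) (hb : b ≤ 1)
    (hc : c ≤ 1) (habc : a + b + c = 2) :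
    x ^ a * y ^ b * z ^ c = (x * y) ^ (1 - c) * (x * z) ^ (1 - b) * (y * z) ^ (1 - a) := by
  have ha' : 0 ≤ 1 - a := sub_nonneg.2 ha
  have hb' : 0 ≤ 1 - b := sub_nonneg.2 hb
  have hc' : 0 ≤ 1 - c := sub_nonneg.2 hc
  have hx : x ^ a = x ^ (1 - c) * x ^ (1 - b) := by
    rw [← ENNReal.rpow_add_of_nonneg _ _ hc' hb']; congr 1; linarith
  have hy : y ^ b = y ^ (1 - c) * y ^ (1 - a) := by
    rw [← ENNReal.rpow_add_of_nonneg _ _ hc' ha']; congr 1; linarith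
  have hz : z ^ c = z ^ (1 - b) * z ^ (1 - a) := by
    rw [← ENNReal.rpow_add_of_nonneg _ _ hb' ha']; congr 1; linarith
  rw [hx, hy, hz, ENNReal.mul_rpow_of_nonneg _ _ ha', ENNReal.mul_rpow_of_nonneg _ _ hb',
    ENNReal.mul_rpow_of_nonneg _ _ hc']
  ring

variable {G : Type*} [AddCommGroup G] [MeasurableSpace G] [MeasurableAdd₂ G] [MeasurableNeg G]
  {μ : Measure G} [SFinite μ] [μ.IsAddLeftInvariant] {f g k : G → ℝ≥0∞}

theorem lintegral_prod_mul_sub_snd (hg : Measurable g) (hk : Measurable k) :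
    ∫⁻ z, g z.2 * k (z.1 - z.2) ∂μ.prod μ = (∫⁻ y, g y ∂μ) * ∫⁻ x, k x ∂μ := by
  rw [lintegral_prod_symm _ (by fun_prop)]
  have translate (y : G) : ∫⁻ x, g y * k (x - y) ∂μ = g y * ∫⁻ x, k x ∂μ := by
    rw [lintegral_const_mul _ (by fun_prop), lintegral_sub_right_eq_self]
  simp only [translate]
  exact lintegral_mul_const _ hg

variable [μ.IsNegInvariant]

theorem lintegral_prod_mul_sub_fst (hf : Measurable f) (hk : Measurable k) :
    ∫⁻ z, f z.1 * k (z.1 - z.2) ∂μ.prod μ = (∫⁻ x, f x ∂μ) * ∫⁻ x, k x ∂μ := by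
  rw [lintegral_prod _ (by fun_prop)]
  have reflect (x : G) : ∫⁻ y, f x * k (x - y) ∂μ = f x * ∫⁻ y, k y ∂μ := by
    rw [lintegral_const_mul _ (by fun_prop), lintegral_sub_left_eq_self]
  simp only [reflect]
  exact lintegral_mul_const _ hf

/-- **Young's convolution inequality** in trilinear form. With `f = F ^ (1 / a)`, `g = H ^ (1 / b)`
and `k = K ^ (1 / c)` it bounds `∫∫ F(x) H(y) K(x - y)` by a product of Lebesgue norms. -/
theorem lintegral_lintegral_mul_mul_sub_le (hf : Measurable f) (hg : Measurable g)
    (hk : Measurable k) {a b c : ℝ} (ha : a ≤ 1) (hb : b ≤ 1) (hc : c ≤ 1)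
    (habc : a + b + c = 2) :
    ∫⁻ x, ∫⁻ y, f x ^ a * g y ^ b * k (x - y) ^ c ∂μ ∂μ ≤
      (∫⁻ x, f x ∂μ) ^ a * (∫⁻ x, g x ∂μ) ^ b * (∫⁻ x, k x ∂μ) ^ c := by
  have holder := ENNReal.lintegral_prod_norm_pow_le (μ := μ.prod μ) Finset.univ
    (f := ![fun z => f z.1 * g z.2, fun z => f z.1 * k (z.1 - z.2),
      fun z => g z.2 * k (z.1 - z.2)]) (p := ![1 - c, 1 - b, 1 - a])
    (by simpa [Fin.forall_fin_succ] using ⟨by fun_prop, by fun_prop, by fun_prop⟩)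
    (by rw [Fin.sum_univ_three]; change 1 - c + (1 - b) + (1 - a) = 1; linarith)
    (by simpa [Fin.forall_fin_succ] using ⟨hc, hb, ha⟩)
  simp only [Fin.prod_univ_three, Matrix.cons_val_zero, Matrix.cons_val_one, Matrix.cons_val]
    at holder
  rw [lintegral_prod_mul_sub_fst hf hk, lintegral_prod_mul_sub_snd hg hk,
    lintegral_prod_mul hf.aemeasurable hg.aemeasurable] at holder
  rw [lintegral_lintegral (by fun_prop), rpow_mul_rpow_mul_rpow_eq _ _ _ ha hb hc habc]
  simpa only [rpow_mul_rpow_mul_rpow_eq _ _ _ ha hb hc habc] using holder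

end Young

section Mass

variable {X F : Type*} [TopologicalSpace X] [NormedAddCommGroup F] {u : X → F}

theorem hasCompactSupport_norm_sq (hc : HasCompactSupport u) :
    HasCompactSupport fun x => ‖u x‖ ^ 2 :=
  hc.comp_left (g := fun y => ‖y‖ ^ 2) (by simp)

variable [MeasurableSpace X] [OpensMeasurableSpace X] {μ : Measure X}
  [IsFiniteMeasureOnCompacts μ]

theorem integrable_norm_sq (hu : Continuous u) (hc : HasCompactSupport u) :
    Integrable (fun x => ‖u x‖ ^ 2) μ :=
  (hu.norm.pow 2).integrable_of_hasCompactSupport (hasCompactSupport_norm_sq hc)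

theorem lintegral_enorm_sq (hu : Continuous u) (hc : HasCompactSupport u) :
    ∫⁻ x, ‖u x‖ₑ ^ 2 ∂μ = ENNReal.ofReal (∫ x, ‖u x‖ ^ 2 ∂μ) := by
  rw [ofReal_integral_eq_lintegral_ofReal (integrable_norm_sq hu hc)
    (Filter.Eventually.of_forall fun _ => sq_nonneg _)]
  simp_rw [ENNReal.ofReal_pow (norm_nonneg _), ofReal_norm]

end Mass

section Sobolev

variable {N : ℕ} {F : Type*} [NormedAddCommGroup F] [NormedSpace ℝ F]
  {u : EuclideanSpace ℝ (Fin N) → F}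

theorem gradSq_nonneg (u : EuclideanSpace ℝ (Fin N) → F) (x : EuclideanSpace ℝ (Fin N)) :
    0 ≤ gradSq u x :=
  Finset.sum_nonneg fun _ _ => sq_nonneg _

theorem sq_norm_fderiv_le_gradSq (u : EuclideanSpace ℝ (Fin N) → F)
    (x : EuclideanSpace ℝ (Fin N)) : ‖fderiv ℝ u x‖ ^ 2 ≤ gradSq u x := by
  rw [← Real.le_sqrt (norm_nonneg _) (gradSq_nonneg u x)]
  refine ContinuousLinearMap.opNorm_le_bound _ (Real.sqrt_nonneg _) fun v => ?_
  calc ‖fderiv ℝ u x v‖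
      = ‖∑ i, v i • fderiv ℝ u x (EuclideanSpace.single i 1)‖ := by
        conv_lhs => rw [← (EuclideanSpace.basisFun (Fin N) ℝ).sum_repr v, map_sum]
        simp
    _ ≤ ∑ i, ‖fderiv ℝ u x (EuclideanSpace.single i 1)‖ * ‖v i‖ := by
        refine (norm_sum_le _ _).trans_eq (Finset.sum_congr rfl fun i _ => ?_)
        rw [norm_smul, mul_comm]
    _ ≤ √(gradSq u x) * ‖v‖ := by
        rw [EuclideanSpace.norm_eq]
        exact Real.sum_mul_le_sqrt_mul_sqrt _ _ _

theorem enorm_fderiv_sq_le_ofReal_gradSq (u : EuclideanSpace ℝ (Fin N) → F)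
    (x : EuclideanSpace ℝ (Fin N)) : ‖fderiv ℝ u x‖ₑ ^ 2 ≤ ENNReal.ofReal (gradSq u x) := by
  rw [← ofReal_norm, ← ENNReal.ofReal_pow (norm_nonneg _)]
  exact ENNReal.ofReal_le_ofReal (sq_norm_fderiv_le_gradSq u x)

theorem integrable_gradSq (hu : ContDiff ℝ 1 u) (hc : HasCompactSupport u) :
    Integrable (gradSq u) :=
  integrable_finsetSum _ fun i _ =>
    integrable_norm_sq ((hu.continuous_fderiv one_ne_zero).clm_apply continuous_const)
      (hc.fderiv_apply (𝕜 := ℝ) (EuclideanSpace.single i 1))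

theorem lintegral_ofReal_gradSq (hu : ContDiff ℝ 1 u) (hc : HasCompactSupport u) :
    ∫⁻ x, ENNReal.ofReal (gradSq u x) = ENNReal.ofReal (∫ x, gradSq u x) :=
  (ofReal_integral_eq_lintegral_ofReal (integrable_gradSq hu hc)
    (Filter.Eventually.of_forall (gradSq_nonneg u))).symm

theorem exists_lintegral_enorm_rpow_sobolev_le (F : Type*) [NormedAddCommGroup F]
    [NormedSpace ℝ F] [FiniteDimensional ℝ F] (hN : 3 ≤ N) :
    ∃ C : ℝ≥0, ∀ u : EuclideanSpace ℝ (Fin N) → F, ContDiff ℝ 1 u → HasCompactSupport u →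
      ∫⁻ x, ‖u x‖ₑ ^ (2 * N / (N - 2) : ℝ) ≤
        C * (∫⁻ x, ENNReal.ofReal (gradSq u x)) ^ (N / (N - 2) : ℝ) := by
  have hN2 : (0 : ℝ) < N - 2 := by
    have : (3 : ℝ) ≤ N := by exact_mod_cast hN
    linarith
  obtain ⟨q, hq⟩ : ∃ q : ℝ≥0, (q : ℝ) = 2 * N / (N - 2) := ⟨⟨_, by positivity⟩, rfl⟩
  have hq0 : q ≠ 0 := by
    rw [← NNReal.coe_ne_zero, hq]; positivity
  have hconj : (q : ℝ)⁻¹ = ((2 : ℝ≥0) : ℝ)⁻¹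
      - (Module.finrank ℝ (EuclideanSpace ℝ (Fin N)) : ℝ)⁻¹ := by
    rw [hq, finrank_euclideanSpace_fin, NNReal.coe_ofNat]; field_simp
  let C := SNormLESNormFDerivOfEqConst F (volume : Measure (EuclideanSpace ℝ (Fin N))) (2 : ℝ≥0)
  refine ⟨C ^ (q : ℝ), fun u hu hc => ?_⟩
  calc ∫⁻ x, ‖u x‖ₑ ^ (2 * N / (N - 2) : ℝ)
      = eLpNorm u q ^ (q : ℝ) := by rw [eLpNorm_nnreal_pow_eq_lintegral hq0, hq]
    _ ≤ (C * eLpNorm (fderiv ℝ u) (2 : ℝ≥0)) ^ (q : ℝ) := by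
        gcongr
        exact eLpNorm_le_eLpNorm_fderiv_of_eq volume hu hc one_le_two
          (by rw [finrank_euclideanSpace_fin]; omega) hconj
    _ = (C ^ (q : ℝ) : ℝ≥0) * (∫⁻ x, ‖fderiv ℝ u x‖ₑ ^ 2) ^ (N / (N - 2) : ℝ) := by
        have hexp : (q : ℝ) = ((2 : ℝ≥0) : ℝ) * (N / (N - 2)) := by
          rw [hq, NNReal.coe_ofNat]; ring
        rw [ENNReal.mul_rpow_of_nonneg _ _ q.coe_nonneg, ENNReal.coe_rpow_of_nonneg _ q.coe_nonneg]
        nth_rw 2 [hexp]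
        rw [ENNReal.rpow_mul, eLpNorm_nnreal_pow_eq_lintegral two_ne_zero]
        simp only [NNReal.coe_ofNat, ENNReal.rpow_two]
    _ ≤ _ := by
        gcongr with x
        exact enorm_fderiv_sq_le_ofReal_gradSq u x

theorem exists_lintegral_enorm_rpow_gagliardoNirenberg_le (F : Type*) [NormedAddCommGroup F]
    [NormedSpace ℝ F] [FiniteDimensional ℝ F] (hN : 3 ≤ N) {q t : ℝ} (hq : 2 ≤ q)
    (htq : t ≤ q / 2) (ht : t = N * (q - 2) / 4) :
    ∃ C : ℝ≥0, ∀ u : EuclideanSpace ℝ (Fin N) → F, ContDiff ℝ 1 u → HasCompactSupport u →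
      ∫⁻ x, ‖u x‖ₑ ^ q ≤
        C * (∫⁻ x, ‖u x‖ₑ ^ 2) ^ (q / 2 - t) * (∫⁻ x, ENNReal.ofReal (gradSq u x)) ^ t := by
  have hN2 : (0 : ℝ) < N - 2 := by
    have : (3 : ℝ) ≤ N := by exact_mod_cast hN
    linarith
  obtain ⟨C, hC⟩ := exists_lintegral_enorm_rpow_sobolev_le F hN
  -- Hölder interpolation `L² – L^{2*}`: `q = 2 (1 - l) + 2* l`.
  set l : ℝ := (N - 2) / N * t with hl
  have ht0 : 0 ≤ t := by
    rw [ht]; have := sub_nonneg.2 hq; positivity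
  have hl0 : 0 ≤ l := by positivity
  have hl1 : 1 - l = q / 2 - t := by
    rw [hl, ht]; field_simp; ring
  have hq_eq : q = 2 * (1 - l) + 2 * N / (N - 2) * l := by
    rw [hl1, hl, ht]; field_simp; ring
  refine ⟨C ^ l, fun u hu hc => ?_⟩
  have hm : Measurable fun x => ‖u x‖ₑ := hu.continuous.enorm.measurable
  calc ∫⁻ x, ‖u x‖ₑ ^ q
      = ∫⁻ x, (‖u x‖ₑ ^ 2) ^ (1 - l) * (‖u x‖ₑ ^ (2 * N / (N - 2) : ℝ)) ^ l := by
        refine lintegral_congr fun x => ?_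
        rw [← ENNReal.rpow_two, ← ENNReal.rpow_mul, ← ENNReal.rpow_mul,
          ← ENNReal.rpow_add_of_nonneg _ _ (by linarith) (by positivity), ← hq_eq]
    _ ≤ (∫⁻ x, ‖u x‖ₑ ^ 2) ^ (1 - l) * (∫⁻ x, ‖u x‖ₑ ^ (2 * N / (N - 2) : ℝ)) ^ l :=
        ENNReal.lintegral_mul_norm_pow_le (hm.pow_const _).aemeasurable
          (hm.pow_const _).aemeasurable (by linarith) hl0 (by ring)
    _ ≤ (∫⁻ x, ‖u x‖ₑ ^ 2) ^ (1 - l) *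
          (C * (∫⁻ x, ENNReal.ofReal (gradSq u x)) ^ (N / (N - 2) : ℝ)) ^ l := by
        gcongr
        exact hC u hu hc
    _ = _ := by
        have hNl : N / (N - 2) * l = t := by rw [hl]; field_simp
        rw [ENNReal.mul_rpow_of_nonneg _ _ hl0, ← ENNReal.rpow_mul, hNl, hl1,
          ENNReal.coe_rpow_of_nonneg _ hl0]
        ring

end Sobolev

section Interaction

variable {G F : Type*} [AddCommGroup G] [MeasureSpace G] [NormedAddCommGroup F]

/-- The self-interaction energy `∫∫ |u(x)|^p |u(y)|^p K(x - y) dx dy` of the density `|u|^p` through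
the kernel `K`, with values in `[0, ∞]` so that no integrability has to be known beforehand. -/
noncomputable def interactionEnergy (K : G → ℝ≥0∞) (p : ℝ) (u : G → F) : ℝ≥0∞ :=
  ∫⁻ x, ∫⁻ y, ‖u x‖ₑ ^ p * ‖u y‖ₑ ^ p * K (x - y)

variable [MeasurableAdd₂ G] [MeasurableNeg G] [SFinite (volume : Measure G)] {K : G → ℝ≥0∞}
  {u : G → F} {p : ℝ}

theorem interactionEnergy_add (hK : Measurable K) (L : G → ℝ≥0∞)
    (hu : Measurable fun x => ‖u x‖ₑ) :
    interactionEnergy (K + L) p u = interactionEnergy K p u + interactionEnergy L p u := by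
  have hm : Measurable fun z : G × G => ‖u z.1‖ₑ ^ p * ‖u z.2‖ₑ ^ p * K (z.1 - z.2) :=
    (((hu.comp measurable_fst).pow_const _).mul ((hu.comp measurable_snd).pow_const _)).mul
      (hK.comp measurable_sub)
  simp only [interactionEnergy, Pi.add_apply, mul_add]
  rw [← lintegral_add_left hm.lintegral_prod_right']
  exact lintegral_congr fun x => lintegral_add_left (hm.comp measurable_prodMk_left) _

variable [(volume : Measure G).IsAddLeftInvariant] [(volume : Measure G).IsNegInvariant]

theorem interactionEnergy_le (hK : Measurable K) (hu : Measurable fun x => ‖u x‖ₑ) {s : ℝ}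
    (hs0 : 0 < s) (hs1 : s ≤ 1) :
    interactionEnergy K p u ≤
      (∫⁻ x, ‖u x‖ₑ ^ (2 * p / (2 - s))) ^ (2 - s) * (∫⁻ z, K z ^ (1 / s)) ^ s := by
  have h2s : 2 - s ≠ 0 := by linarith
  have hp : 2 * p / (2 - s) * (1 - s / 2) = p := by field_simp
  have young := lintegral_lintegral_mul_mul_sub_le (μ := volume)
    (hu.pow_const (2 * p / (2 - s))) (hu.pow_const (2 * p / (2 - s))) (hK.pow_const (1 / s))
    (a := 1 - s / 2) (b := 1 - s / 2) (by linarith) (by linarith) hs1 (by ring)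
  rw [← ENNReal.rpow_add_of_nonneg _ _ (by linarith) (by linarith),
    show 1 - s / 2 + (1 - s / 2) = 2 - s by ring] at young
  simpa only [interactionEnergy, ← ENNReal.rpow_mul, hp, one_div_mul_cancel hs0.ne',
    ENNReal.rpow_one] using young

end Interaction

theorem exists_interactionEnergy_le {N : ℕ} (F : Type*) [NormedAddCommGroup F] [NormedSpace ℝ F]
    [FiniteDimensional ℝ F] (hN : 3 ≤ N) {p s θ : ℝ} (hs0 : 0 < s) (hs1 : s ≤ 1) (hθ0 : 0 ≤ θ)
    (hθp : θ ≤ p) (hθ : θ = N * (p + s - 2) / 2) {K : EuclideanSpace ℝ (Fin N) → ℝ≥0∞}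
    (hK : Measurable K) (hKs : ∫⁻ z, K z ^ (1 / s) ≠ ⊤) :
    ∃ C : ℝ≥0, ∀ u : EuclideanSpace ℝ (Fin N) → F, ContDiff ℝ 1 u → HasCompactSupport u →
      interactionEnergy K p u ≤
        ENNReal.ofReal (C * (∫ x, ‖u x‖ ^ 2) ^ (p - θ) * (∫ x, gradSq u x) ^ θ) := by
  have hN0 : (0 : ℝ) < N := by exact_mod_cast (by omega : 0 < N)
  have h2s : 0 < 2 - s := by linarith
  have hps : 2 - s ≤ p := by
    have : 0 ≤ p + s - 2 := by
      by_contra! h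
      nlinarith
    linarith
  have ht : θ / (2 - s) = N * (2 * p / (2 - s) - 2) / 4 := by rw [hθ]; field_simp; ring
  have hm : 2 * p / (2 - s) / 2 - θ / (2 - s) = (p - θ) / (2 - s) := by field_simp
  obtain ⟨C, hC⟩ := exists_lintegral_enorm_rpow_gagliardoNirenberg_le F hN
    (q := 2 * p / (2 - s)) (t := θ / (2 - s)) (by rw [le_div_iff₀ h2s]; linarith)
    (by rw [← sub_nonneg, hm]; exact div_nonneg (sub_nonneg.2 hθp) h2s.le) ht
  set W := ∫⁻ z, K z ^ (1 / s)
  refine ⟨C ^ (2 - s) * (W ^ s).toNNReal, fun u hu hc => ?_⟩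
  have hmass : 0 ≤ ∫ x, ‖u x‖ ^ 2 := integral_nonneg fun x => sq_nonneg _
  have hgrad : 0 ≤ ∫ x, gradSq u x := integral_nonneg (gradSq_nonneg u)
  have hW : ((W ^ s).toNNReal : ℝ≥0∞) = W ^ s :=
    ENNReal.coe_toNNReal (ENNReal.rpow_ne_top_of_nonneg hs0.le hKs)
  calc interactionEnergy K p u
      ≤ (∫⁻ x, ‖u x‖ₑ ^ (2 * p / (2 - s))) ^ (2 - s) * W ^ s :=
        interactionEnergy_le hK hu.continuous.enorm.measurable hs0 hs1
    _ ≤ (C * (∫⁻ x, ‖u x‖ₑ ^ 2) ^ ((p - θ) / (2 - s)) *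
          (∫⁻ x, ENNReal.ofReal (gradSq u x)) ^ (θ / (2 - s))) ^ (2 - s) * W ^ s := by
        rw [← hm]
        gcongr
        exact hC u hu hc
    _ = ↑(C ^ (2 - s) * (W ^ s).toNNReal) * (∫⁻ x, ‖u x‖ₑ ^ 2) ^ (p - θ) *
          (∫⁻ x, ENNReal.ofReal (gradSq u x)) ^ θ := by
        rw [ENNReal.mul_rpow_of_nonneg _ _ h2s.le, ENNReal.mul_rpow_of_nonneg _ _ h2s.le,
          ← ENNReal.rpow_mul, ← ENNReal.rpow_mul, div_mul_cancel₀ _ h2s.ne',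
          div_mul_cancel₀ _ h2s.ne', ENNReal.coe_mul, hW, ENNReal.coe_rpow_of_nonneg _ h2s.le]
        ring
    _ = _ := by
        rw [lintegral_enorm_sq hu.continuous hc, lintegral_ofReal_gradSq hu hc,
          ENNReal.ofReal_rpow_of_nonneg hmass (sub_nonneg.2 hθp),
          ENNReal.ofReal_rpow_of_nonneg hgrad hθ0, ← ENNReal.ofReal_coe_nnreal,
          ← ENNReal.ofReal_mul (by positivity), ← ENNReal.ofReal_mul (by positivity)]

theorem integrableOn_compl_ball_norm_rpow_neg {E : Type*} [NormedAddCommGroup E] [NormedSpace ℝ E]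
    [FiniteDimensional ℝ E] [MeasurableSpace E] [BorelSpace E] (μ : Measure E)
    [μ.IsAddHaarMeasure] {r R : ℝ} (hr : Module.finrank ℝ E < r) (hR : 0 < R) :
    IntegrableOn (fun z : E => ‖z‖ ^ (-r)) (Metric.ball 0 R)ᶜ μ := by
  refine ((integrable_one_add_norm hr).const_mul ((R⁻¹ + 1) ^ r)).integrableOn.mono'
    (measurable_norm.pow_const _).aestronglyMeasurable ?_
  filter_upwards [ae_restrict_mem Metric.isOpen_ball.measurableSet.compl] with z hz
  have hRz : R ≤ ‖z‖ := by simpa using hz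
  have hz0 : 0 < ‖z‖ := hR.trans_le hRz
  have hcomp : 1 + ‖z‖ ≤ (R⁻¹ + 1) * ‖z‖ := by
    have : 1 ≤ R⁻¹ * ‖z‖ := by rwa [← div_eq_inv_mul, one_le_div hR]
    linarith
  calc ‖‖z‖ ^ (-r)‖ = (R⁻¹ + 1) ^ r * ((R⁻¹ + 1) * ‖z‖) ^ (-r) := by
        rw [Real.norm_of_nonneg (by positivity), Real.mul_rpow (by positivity) hz0.le,
          ← mul_assoc, ← Real.rpow_add (by positivity), add_neg_cancel, Real.rpow_zero, one_mul]
    _ ≤ (R⁻¹ + 1) ^ r * (1 + ‖z‖) ^ (-r) := by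
        gcongr ?_ * ?_
        exact Real.rpow_le_rpow_of_nonpos (by positivity) hcomp
          (neg_nonpos.2 ((Nat.cast_nonneg _).trans hr.le))

theorem exists_mul_rpow_le_mul_add {θ : ℝ} (hθ0 : 0 ≤ θ) (hθ1 : θ < 1) (A : ℝ) {ε : ℝ}
    (hε : 0 < ε) : ∃ B, ∀ x, 0 ≤ x → A * x ^ θ ≤ ε * x + B := by
  have h1θ : 0 < 1 - θ := sub_pos.2 hθ1
  let δ : ℝ := ε / (|A| + 1)
  have hδ : 0 < δ := by positivity
  let c : ℝ := δ ^ (-θ / (1 - θ))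
  have hc : c ^ (1 - θ) = δ ^ (-θ) := by rw [← Real.rpow_mul hδ.le, div_mul_cancel₀ _ h1θ.ne']
  refine ⟨|A| * c, fun x hx => ?_⟩
  have hx_le : x ^ θ ≤ δ * x + c := calc
    x ^ θ = (δ * x) ^ θ * c ^ (1 - θ) := by
      rw [hc, Real.mul_rpow hδ.le hx, mul_right_comm, ← Real.rpow_add hδ, add_neg_cancel,
        Real.rpow_zero, one_mul]
    _ ≤ θ * (δ * x) + (1 - θ) * c := Real.geom_mean_le_arith_mean2_weighted hθ0 h1θ.le
      (by positivity) (by positivity) (by ring)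
    _ ≤ δ * x + c := add_le_add (mul_le_of_le_one_left (by positivity) hθ1.le)
      (mul_le_of_le_one_left (by positivity) (by linarith))
  calc A * x ^ θ ≤ |A| * (δ * x + c) := by
        gcongr
        exact le_abs_self A
    _ = |A| * δ * x + |A| * c := by ring
    _ ≤ ε * x + |A| * c := by
        gcongr
        rw [← le_div_iff₀ hδ, div_div_cancel₀ hε.ne']
        linarith

section RieszKernel

/-- The Riesz kernel `I_α(z) = 𝒜 |z|^(α - N)` as a function with values in `[0, ∞)`. -/
noncomputable def rieszKernel (N : ℕ) (α : ℝ) (z : EuclideanSpace ℝ (Fin N)) : ℝ≥0∞ :=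
  ‖rieszConst N α * ‖z‖ ^ (α - N)‖ₑ

variable {N : ℕ} {α : ℝ}

theorem measurable_rieszKernel : Measurable (rieszKernel N α) := by
  unfold rieszKernel
  fun_prop

theorem rieszKernel_rpow (z : EuclideanSpace ℝ (Fin N)) {r : ℝ} (hr : 0 ≤ r) :
    rieszKernel N α z ^ r = ‖rieszConst N α‖ₑ ^ r * ‖‖z‖ ^ (-((N - α) * r))‖ₑ := by
  rw [rieszKernel, enorm_mul, ENNReal.mul_rpow_of_nonneg _ _ hr,
    Real.enorm_of_nonneg (r := ‖z‖ ^ _) (by positivity),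
    ENNReal.ofReal_rpow_of_nonneg (by positivity) hr,
    Real.enorm_of_nonneg (r := ‖z‖ ^ _) (by positivity), ← Real.rpow_mul (norm_nonneg z)]
  ring_nf

theorem lintegral_indicator_rieszKernel_rpow_ne_top {S : Set (EuclideanSpace ℝ (Fin N))}
    (hS : MeasurableSet S) {r : ℝ} (hr : 0 < r)
    (hint : IntegrableOn (fun z : EuclideanSpace ℝ (Fin N) => ‖z‖ ^ (-((N - α) * r))) S) :
    ∫⁻ z, S.indicator (rieszKernel N α) z ^ r ≠ ⊤ := by
  have hind (z : EuclideanSpace ℝ (Fin N)) : S.indicator (rieszKernel N α) z ^ r =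
      S.indicator (fun z => ‖rieszConst N α‖ₑ ^ r * ‖‖z‖ ^ (-((N - α) * r))‖ₑ) z := by
    by_cases hz : z ∈ S
    · simp only [Set.indicator_of_mem hz, rieszKernel_rpow z hr.le]
    · simp only [Set.indicator_of_notMem hz, ENNReal.zero_rpow_of_pos hr]
  have hconst : ‖rieszConst N α‖ₑ ^ r ≠ ⊤ := ENNReal.rpow_ne_top_of_nonneg hr.le enorm_ne_top
  simp only [hind]
  rw [lintegral_indicator hS, lintegral_const_mul' _ _ hconst]
  exact ENNReal.mul_ne_top hconst hint.2.ne

theorem lintegral_indicator_ball_rieszKernel_rpow_ne_top (hN : 1 ≤ N) {r : ℝ} (hr : 0 < r)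
    (hrN : (N - α) * r < N) :
    ∫⁻ z, (Metric.ball 0 1).indicator (rieszKernel N α) z ^ r ≠ ⊤ :=
  lintegral_indicator_rieszKernel_rpow_ne_top measurableSet_ball hr
    (integrableOn_ball_of_norm_le_rpow (C := 1) (α := (N - α) * r)
      (by rwa [finrank_euclideanSpace_fin]) (by rwa [finrank_euclideanSpace_fin])
      (Filter.Eventually.of_forall fun z => by
        rw [one_mul, Real.norm_of_nonneg (by positivity)])
      (measurable_norm.pow_const _).aestronglyMeasurable)

theorem lintegral_indicator_compl_ball_rieszKernel_rpow_ne_top {r : ℝ} (hr : 0 < r)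
    (hrN : N < (N - α) * r) :
    ∫⁻ z, (Metric.ball 0 1)ᶜ.indicator (rieszKernel N α) z ^ r ≠ ⊤ :=
  lintegral_indicator_rieszKernel_rpow_ne_top measurableSet_ball.compl hr
    (integrableOn_compl_ball_norm_rpow_neg volume (by rwa [finrank_euclideanSpace_fin]) one_pos)

theorem enorm_choquardTerm_le {p : ℝ} (hp : 0 ≤ p) (u : EuclideanSpace ℝ (Fin N) → ℂ) :
    ‖choquardTerm N α p u‖ₑ ≤ interactionEnergy (rieszKernel N α) p u := by
  have hpow (x : EuclideanSpace ℝ (Fin N)) : ‖‖u x‖ ^ p‖ₑ = ‖u x‖ₑ ^ p := by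
    rw [Real.enorm_of_nonneg (by positivity), ← ofReal_norm,
      ENNReal.ofReal_rpow_of_nonneg (norm_nonneg _) hp]
  calc ‖choquardTerm N α p u‖ₑ
      ≤ ∫⁻ x, ‖rieszConv N α p u x * ‖u x‖ ^ p‖ₑ := enorm_integral_le_lintegral_enorm _
    _ ≤ ∫⁻ x, (∫⁻ y, rieszKernel N α (x - y) * ‖u y‖ₑ ^ p) * ‖u x‖ₑ ^ p := by
        gcongr with x
        rw [enorm_mul, hpow]
        gcongr
        refine (enorm_integral_le_lintegral_enorm _).trans_eq (lintegral_congr fun y => ?_)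
        rw [enorm_mul, hpow, rieszKernel]
    _ = interactionEnergy (rieszKernel N α) p u := by
        refine lintegral_congr fun x => ?_
        rw [← lintegral_mul_const' _ _ (ENNReal.rpow_ne_top_of_nonneg hp enorm_ne_top)]
        exact lintegral_congr fun y => by ring

theorem enorm_choquardTerm_le_add {p : ℝ} (hp : 0 ≤ p) {S : Set (EuclideanSpace ℝ (Fin N))}
    (hS : MeasurableSet S) {u : EuclideanSpace ℝ (Fin N) → ℂ} (hu : Continuous u) :
    ‖choquardTerm N α p u‖ₑ ≤ interactionEnergy (S.indicator (rieszKernel N α)) p u +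
      interactionEnergy (Sᶜ.indicator (rieszKernel N α)) p u := by
  rw [← interactionEnergy_add (measurable_rieszKernel.indicator hS) _ hu.enorm.measurable,
    Set.indicator_self_add_compl]
  exact enorm_choquardTerm_le hp u

theorem exists_choquardTerm_le (hN : 3 ≤ N) (hα0 : 0 < α) (hαN : α < N) {p : ℝ}
    (hp1 : (N + α) / N < p) (hp2 : p < 1 + (2 + α) / N) :
    ∃ θ₁ ∈ Set.Ioo (0 : ℝ) 1, ∃ θ₂ ∈ Set.Ioo (0 : ℝ) 1, ∃ C₁ C₂ : ℝ≥0,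
      ∀ u : EuclideanSpace ℝ (Fin N) → ℂ, ContDiff ℝ 1 u → HasCompactSupport u →
        choquardTerm N α p u ≤
          C₁ * (∫ x, ‖u x‖ ^ 2) ^ (p - θ₁) * (∫ x, gradSq u x) ^ θ₁ +
          C₂ * (∫ x, ‖u x‖ ^ 2) ^ (p - θ₂) * (∫ x, gradSq u x) ^ θ₂ := by
  have hN0 : (0 : ℝ) < N := hα0.trans hαN
  have hp : 1 < p := lt_trans (by rw [one_lt_div hN0]; linarith) hp1
  obtain ⟨θ₀, hθ₀⟩ : ∃ θ₀ : ℝ, θ₀ = (N * (p - 1) - α) / 2 := ⟨_, rfl⟩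
  have hθ₀_pos : 0 < θ₀ := by
    rw [div_lt_iff₀ hN0] at hp1; linarith
  have hθ₀_lt : θ₀ < 1 := by
    rw [← sub_lt_iff_lt_add', lt_div_iff₀ hN0] at hp2; linarith
  obtain ⟨η, hη0, hη⟩ : ∃ η, 0 < η ∧ η < min (min θ₀ (1 - θ₀)) (min (α / 2) ((N - α) / 2)) :=
    exists_between (by simp only [lt_min_iff]; refine ⟨⟨?_, ?_⟩, ?_, ?_⟩ <;> linarith)
  simp only [lt_min_iff] at hη
  obtain ⟨⟨hη_θ₀, hη_one⟩, hη_α, hη_N⟩ := hη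
  have hs1 : 0 < (N - α + 2 * η) / N := div_pos (by linarith) hN0
  have hs2 : 0 < (N - α - 2 * η) / N := div_pos (by linarith) hN0
  obtain ⟨C₁, hC₁⟩ := exists_interactionEnergy_le ℂ hN (p := p) (θ := θ₀ + η) hs1
    (by rw [div_le_one hN0]; linarith) (by linarith) (by linarith) (by rw [hθ₀]; field_simp; ring)
    (measurable_rieszKernel.indicator measurableSet_ball)
    (lintegral_indicator_ball_rieszKernel_rpow_ne_top (α := α) (by omega) (one_div_pos.2 hs1)
      (by rw [one_div_div, ← mul_div_assoc, div_lt_iff₀ (by linarith)]; nlinarith))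
  obtain ⟨C₂, hC₂⟩ := exists_interactionEnergy_le ℂ hN (p := p) (θ := θ₀ - η) hs2
    (by rw [div_le_one hN0]; linarith) (by linarith) (by linarith) (by rw [hθ₀]; field_simp; ring)
    (measurable_rieszKernel.indicator measurableSet_ball.compl)
    (lintegral_indicator_compl_ball_rieszKernel_rpow_ne_top (α := α) (one_div_pos.2 hs2)
      (by rw [one_div_div, ← mul_div_assoc, lt_div_iff₀ (by linarith)]; nlinarith))
  refine ⟨θ₀ + η, ⟨by linarith, by linarith⟩, θ₀ - η, ⟨by linarith, by linarith⟩, C₁, C₂,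
    fun u hu hc => ?_⟩
  have hgrad : 0 ≤ ∫ x, gradSq u x := integral_nonneg (gradSq_nonneg u)
  refine (le_abs_self _).trans ((ENNReal.ofReal_le_ofReal_iff (by positivity)).1 ?_)
  rw [← Real.enorm_eq_ofReal_abs, ENNReal.ofReal_add (by positivity) (by positivity)]
  exact (enorm_choquardTerm_le_add (by linarith) measurableSet_ball hu.continuous).trans
    (add_le_add (hC₁ u hu hc) (hC₂ u hu hc))

theorem exists_choquardTerm_le_mul_add (hN : 3 ≤ N) (hα0 : 0 < α) (hαN : α < N) {p : ℝ}
    (hp1 : (N + α) / N < p) (hp2 : p < 1 + (2 + α) / N) (M : ℝ) {ε : ℝ} (hε : 0 < ε) :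
    ∃ B, ∀ u : EuclideanSpace ℝ (Fin N) → ℂ, ContDiff ℝ 1 u → HasCompactSupport u →
      ∫ x, ‖u x‖ ^ 2 ≤ M → choquardTerm N α p u ≤ ε * (∫ x, gradSq u x) + B := by
  have hN0 : (0 : ℝ) < N := hα0.trans hαN
  have hp : 1 < p := lt_trans (by rw [one_lt_div hN0]; linarith) hp1
  obtain ⟨θ₁, ⟨hθ₁, hθ₁'⟩, θ₂, ⟨hθ₂, hθ₂'⟩, C₁, C₂, hC⟩ :=
    exists_choquardTerm_le hN hα0 hαN hp1 hp2
  obtain ⟨B₁, hB₁⟩ := exists_mul_rpow_le_mul_add hθ₁.le hθ₁' (C₁ * M ^ (p - θ₁)) (half_pos hε)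
  obtain ⟨B₂, hB₂⟩ := exists_mul_rpow_le_mul_add hθ₂.le hθ₂' (C₂ * M ^ (p - θ₂)) (half_pos hε)
  refine ⟨B₁ + B₂, fun u hu hc hM => ?_⟩
  have hgrad : 0 ≤ ∫ x, gradSq u x := integral_nonneg (gradSq_nonneg u)
  calc choquardTerm N α p u
      ≤ C₁ * (∫ x, ‖u x‖ ^ 2) ^ (p - θ₁) * (∫ x, gradSq u x) ^ θ₁ +
          C₂ * (∫ x, ‖u x‖ ^ 2) ^ (p - θ₂) * (∫ x, gradSq u x) ^ θ₂ := hC u hu hc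
    _ ≤ C₁ * M ^ (p - θ₁) * (∫ x, gradSq u x) ^ θ₁ +
          C₂ * M ^ (p - θ₂) * (∫ x, gradSq u x) ^ θ₂ := by
        have hp1 : 0 ≤ p - θ₁ := by linarith
        have hp2 : 0 ≤ p - θ₂ := by linarith
        gcongr
    _ ≤ ε / 2 * (∫ x, gradSq u x) + B₁ + (ε / 2 * (∫ x, gradSq u x) + B₂) :=
        add_le_add (hB₁ _ hgrad) (hB₂ _ hgrad)
    _ = ε * (∫ x, gradSq u x) + (B₁ + B₂) := by ring

end RieszKernel

section Hardy

theorem integrable_fderiv_apply {E F : Type*} [NormedAddCommGroup E] [NormedSpace ℝ E]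
    [MeasurableSpace E] [OpensMeasurableSpace E] {μ : Measure E} [IsFiniteMeasureOnCompacts μ]
    [NormedAddCommGroup F] [NormedSpace ℝ F] {g : E → F} (hg : ContDiff ℝ 1 g)
    (hc : HasCompactSupport g) (v : E) : Integrable (fun x => fderiv ℝ g x v) μ :=
  ((hg.continuous_fderiv one_ne_zero).clm_apply continuous_const).integrable_of_hasCompactSupport
    (hc.fderiv_apply (𝕜 := ℝ) v)

theorem integral_fderiv_apply_eq_zero {E F : Type*} [NormedAddCommGroup E] [NormedSpace ℝ E]
    [FiniteDimensional ℝ E] [MeasurableSpace E] [BorelSpace E] {μ : Measure E} [μ.IsAddHaarMeasure]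
    [NormedAddCommGroup F] [NormedSpace ℝ F] {g : E → F} (hg : ContDiff ℝ 1 g)
    (hc : HasCompactSupport g) (v : E) : ∫ x, fderiv ℝ g x v ∂μ = 0 := by
  simpa using integral_smul_fderiv_eq_neg_fderiv_smul_of_integrable (μ := μ) (𝕜 := ℝ)
    (f := fun _ => 1) (g := g) (v := v) (by simp)
    (by simpa using integrable_fderiv_apply hg hc v)
    (by simpa using hg.continuous.integrable_of_hasCompactSupport hc)
    (fun _ _ => by fun_prop) (fun x _ => hg.differentiable one_ne_zero x)

variable {N : ℕ} {F : Type*} [NormedAddCommGroup F] {u : EuclideanSpace ℝ (Fin N) → F} {ε : ℝ}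

/-- The `i`-th component of the vector field `|u|² x / (|x|² + ε)`. Its divergence has integral
zero, which is the integration by parts behind Hardy's inequality; `ε` removes the singularity. -/
noncomputable def hardyField (ε : ℝ) (u : EuclideanSpace ℝ (Fin N) → F) (i : Fin N)
    (x : EuclideanSpace ℝ (Fin N)) : ℝ :=
  x i * (‖x‖ ^ 2 + ε)⁻¹ * ‖u x‖ ^ 2

theorem hasCompactSupport_hardyField (hc : HasCompactSupport u) (i : Fin N) :
    HasCompactSupport (hardyField ε u i) :=
  (hasCompactSupport_norm_sq hc).mul_left

theorem integrable_norm_sq_div_norm_sq_add (hu : Continuous u) (hc : HasCompactSupport u)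
    (hε : 0 < ε) : Integrable fun x => ‖u x‖ ^ 2 / (‖x‖ ^ 2 + ε) := by
  refine Continuous.integrable_of_hasCompactSupport ?_ ?_
  · exact (hu.norm.pow 2).div (by fun_prop) fun x => by positivity
  · simp only [div_eq_mul_inv]
    exact (hasCompactSupport_norm_sq hc).mul_right

theorem integrable_norm_sq_div_norm_sq (hN : 3 ≤ N) (hu : Continuous u)
    (hc : HasCompactSupport u) : Integrable fun x => ‖u x‖ ^ 2 / ‖x‖ ^ 2 := by
  have hloc : LocallyIntegrable fun x : EuclideanSpace ℝ (Fin N) => (‖x‖ ^ 2)⁻¹ :=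
    locallyIntegrable_of_norm_le_rpow (C := 1) (α := 2)
      (by rw [finrank_euclideanSpace_fin]; omega)
      (by rw [finrank_euclideanSpace_fin]; exact_mod_cast hN)
      (Filter.Eventually.of_forall fun x => by
        rw [one_mul, Real.norm_of_nonneg (by positivity), Real.rpow_neg (norm_nonneg x),
          Real.rpow_two])
      (by fun_prop)
  have hu2 : Continuous fun x => ‖u x‖ ^ 2 := hu.norm.pow 2
  simpa only [smul_eq_mul, ← div_eq_inv_mul] using
    hloc.integrable_smul_right_of_hasCompactSupport hu2 (hasCompactSupport_norm_sq hc)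

variable [InnerProductSpace ℝ F]

theorem contDiff_hardyField (hu : ContDiff ℝ 1 u) (hε : 0 < ε) (i : Fin N) :
    ContDiff ℝ 1 (hardyField ε u i) := by
  have hinv : ContDiff ℝ 1 fun x : EuclideanSpace ℝ (Fin N) => (‖x‖ ^ 2 + ε)⁻¹ :=
    ((contDiff_norm_sq ℝ).add contDiff_const).inv fun x => by positivity
  exact (ContDiff.mul (by fun_prop) hinv).mul (hu.norm_sq ℝ)

theorem fderiv_hardyField_single {x : EuclideanSpace ℝ (Fin N)} (hu : DifferentiableAt ℝ u x)
    (hε : 0 < ε) (i : Fin N) :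
    fderiv ℝ (hardyField ε u i) x (EuclideanSpace.single i 1) =
      (‖x‖ ^ 2 + ε)⁻¹ * ‖u x‖ ^ 2 - 2 * x i ^ 2 * (‖x‖ ^ 2 + ε)⁻¹ ^ 2 * ‖u x‖ ^ 2 +
        2 * x i * (‖x‖ ^ 2 + ε)⁻¹ * inner ℝ (u x) (fderiv ℝ u x (EuclideanSpace.single i 1)) := by
  have hcoord : HasFDerivAt (fun x : EuclideanSpace ℝ (Fin N) => x i)
      (EuclideanSpace.proj i : EuclideanSpace ℝ (Fin N) →L[ℝ] ℝ) x :=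
    (EuclideanSpace.proj i : EuclideanSpace ℝ (Fin N) →L[ℝ] ℝ).hasFDerivAt
  have hinv := (hasDerivAt_inv (by positivity : ‖x‖ ^ 2 + ε ≠ 0)).comp_hasFDerivAt x
    ((hasFDerivAt_id x).norm_sq.add_const ε)
  have hprod : HasFDerivAt (hardyField ε u i) _ x := (hcoord.mul hinv).mul hu.hasFDerivAt.norm_sq
  rw [hprod.fderiv]
  simp only [id_eq, Pi.mul_apply, Function.comp_apply, ContinuousLinearMap.comp_id, neg_smul,
    smul_neg, smul_add, add_apply, smul_apply, ContinuousLinearMap.comp_apply, coe_innerSL_apply,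
    nsmul_eq_mul, Nat.cast_ofNat, smul_eq_mul, neg_apply, EuclideanSpace.inner_single_right,
    ringHom_apply, one_mul, PiLp.proj_apply, PiLp.single_eq_same, mul_one, inv_pow]
  ring

theorem sum_norm_sq_fderiv_add_smul {x : EuclideanSpace ℝ (Fin N)} (hu : DifferentiableAt ℝ u x)
    (hε : 0 < ε) (c : ℝ) :
    ∑ i, ‖fderiv ℝ u x (EuclideanSpace.single i 1) + (c * (‖x‖ ^ 2 + ε)⁻¹ * x i) • u x‖ ^ 2 =
      gradSq u x + c * ∑ i, fderiv ℝ (hardyField ε u i) x (EuclideanSpace.single i 1) -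
        c * N * (‖x‖ ^ 2 + ε)⁻¹ * ‖u x‖ ^ 2 +
        (2 * c + c ^ 2) * ‖x‖ ^ 2 * (‖x‖ ^ 2 + ε)⁻¹ ^ 2 * ‖u x‖ ^ 2 := by
  set w := (‖x‖ ^ 2 + ε)⁻¹ with hw
  have hconst : c * N * w * ‖u x‖ ^ 2 = ∑ _i : Fin N, c * w * ‖u x‖ ^ 2 := by
    rw [Finset.sum_const, Finset.card_univ, Fintype.card_fin, nsmul_eq_mul]
    ring
  rw [hconst, gradSq, EuclideanSpace.real_norm_sq_eq x, Finset.mul_sum, Finset.mul_sum,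
    Finset.sum_mul, Finset.sum_mul, ← Finset.sum_add_distrib, ← Finset.sum_sub_distrib,
    ← Finset.sum_add_distrib]
  refine Finset.sum_congr rfl fun i _ => ?_
  rw [fderiv_hardyField_single hu hε, norm_add_sq_real, norm_smul, inner_smul_right,
    real_inner_comm, mul_pow, Real.norm_eq_abs, sq_abs, ← hw]
  ring

theorem mul_norm_sq_div_le_gradSq_add {x : EuclideanSpace ℝ (Fin N)} (hu : DifferentiableAt ℝ u x)
    (hε : 0 < ε) {c : ℝ} (hc : 0 ≤ c) :
    c * (N - 2 - c) * (‖u x‖ ^ 2 / (‖x‖ ^ 2 + ε)) ≤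
      gradSq u x + c * ∑ i, fderiv ℝ (hardyField ε u i) x (EuclideanSpace.single i 1) := by
  have hsq := sum_norm_sq_fderiv_add_smul hu hε c
  have hnonneg : 0 ≤ ∑ i, ‖fderiv ℝ u x (EuclideanSpace.single i 1) +
      (c * (‖x‖ ^ 2 + ε)⁻¹ * x i) • u x‖ ^ 2 := Finset.sum_nonneg fun _ _ => sq_nonneg _
  rw [div_eq_mul_inv]
  set w := (‖x‖ ^ 2 + ε)⁻¹ with hw
  have hxw : ‖x‖ ^ 2 * w ≤ 1 := by
    rw [hw, ← div_eq_mul_inv, div_le_one (by positivity)]; linarith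
  have hradial : (2 * c + c ^ 2) * ‖x‖ ^ 2 * w ^ 2 * ‖u x‖ ^ 2 ≤ (2 * c + c ^ 2) * w * ‖u x‖ ^ 2 :=
    calc (2 * c + c ^ 2) * ‖x‖ ^ 2 * w ^ 2 * ‖u x‖ ^ 2
        = (2 * c + c ^ 2) * w * ‖u x‖ ^ 2 * (‖x‖ ^ 2 * w) := by ring
      _ ≤ (2 * c + c ^ 2) * w * ‖u x‖ ^ 2 := mul_le_of_le_one_right (by positivity) hxw
  linarith

theorem hardy_inequality_regularized (hu : ContDiff ℝ 1 u) (hc : HasCompactSupport u) (hε : 0 < ε)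
    {c : ℝ} (hc0 : 0 ≤ c) :
    c * (N - 2 - c) * ∫ x, ‖u x‖ ^ 2 / (‖x‖ ^ 2 + ε) ≤ ∫ x, gradSq u x := by
  have hdiv (i : Fin N) : Integrable fun x =>
      fderiv ℝ (hardyField ε u i) x (EuclideanSpace.single i 1) :=
    integrable_fderiv_apply (contDiff_hardyField hu hε i) (hasCompactSupport_hardyField hc i) _
  have hsum : Integrable fun x =>
      c * ∑ i, fderiv ℝ (hardyField ε u i) x (EuclideanSpace.single i 1) :=
    (integrable_finsetSum _ fun i _ => hdiv i).const_mul c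
  calc c * (N - 2 - c) * ∫ x, ‖u x‖ ^ 2 / (‖x‖ ^ 2 + ε)
      = ∫ x, c * (N - 2 - c) * (‖u x‖ ^ 2 / (‖x‖ ^ 2 + ε)) := (integral_const_mul _ _).symm
    _ ≤ ∫ x, (gradSq u x + c * ∑ i, fderiv ℝ (hardyField ε u i) x (EuclideanSpace.single i 1)) :=
        integral_mono ((integrable_norm_sq_div_norm_sq_add hu.continuous hc hε).const_mul _)
          ((integrable_gradSq hu hc).add hsum) fun x =>
            mul_norm_sq_div_le_gradSq_add (hu.differentiable one_ne_zero x) hε hc0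
    _ = ∫ x, gradSq u x := by
        rw [integral_add (integrable_gradSq hu hc) hsum, integral_const_mul,
          integral_finsetSum _ fun i _ => hdiv i]
        simp only [integral_fderiv_apply_eq_zero (contDiff_hardyField hu hε _)
          (hasCompactSupport_hardyField hc _), Finset.sum_const_zero, mul_zero, add_zero]

theorem hardy_inequality (hN : 3 ≤ N) (hu : ContDiff ℝ 1 u) (hc : HasCompactSupport u) :
    ((N : ℝ) - 2) ^ 2 / 4 * ∫ x, ‖u x‖ ^ 2 / ‖x‖ ^ 2 ≤ ∫ x, gradSq u x := by
  have : Nonempty (Fin N) := ⟨⟨0, by omega⟩⟩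
  have hN2 : (0 : ℝ) ≤ (N - 2) / 2 := by
    have : (3 : ℝ) ≤ N := by exact_mod_cast hN
    linarith
  have hne : ∀ᵐ x : EuclideanSpace ℝ (Fin N), x ≠ 0 := Measure.ae_ne volume 0
  have hlim : Filter.Tendsto (fun n : ℕ => ∫ x, ‖u x‖ ^ 2 / (‖x‖ ^ 2 + 1 / ((n : ℝ) + 1)))
      Filter.atTop (nhds (∫ x, ‖u x‖ ^ 2 / ‖x‖ ^ 2)) := by
    refine tendsto_integral_of_dominated_convergence _ (fun n => ?_)
      (integrable_norm_sq_div_norm_sq hN hu.continuous hc) (fun n => ?_) ?_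
    · exact (integrable_norm_sq_div_norm_sq_add hu.continuous hc
        Nat.one_div_pos_of_nat).aestronglyMeasurable
    · filter_upwards [hne] with x hx
      rw [Real.norm_of_nonneg (by positivity)]
      exact div_le_div_of_nonneg_left (sq_nonneg _) (pow_pos (norm_pos_iff.2 hx) 2)
        (le_add_of_nonneg_right (by positivity))
    · filter_upwards [hne] with x hx
      have hx0 : ‖x‖ ^ 2 ≠ 0 := pow_ne_zero 2 (norm_ne_zero_iff.2 hx)
      refine tendsto_const_nhds.div ?_ hx0
      simpa only [add_zero] using tendsto_one_div_add_atTop_nhds_zero_nat.const_add (‖x‖ ^ 2)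
  refine le_of_tendsto (hlim.const_mul _) (Filter.Eventually.of_forall fun n => ?_)
  rw [show ((N : ℝ) - 2) ^ 2 / 4 = (N - 2) / 2 * (N - 2 - (N - 2) / 2) by ring]
  exact hardy_inequality_regularized hu hc Nat.one_div_pos_of_nat hN2

theorem exists_mul_integral_gradSq_le (F : Type*) [NormedAddCommGroup F] [InnerProductSpace ℝ F]
    (hN : 3 ≤ N) {b : ℝ} (hb : -(((N : ℝ) - 2) ^ 2 / 4) < b) :
    ∃ κ > 0, ∀ u : EuclideanSpace ℝ (Fin N) → F, ContDiff ℝ 1 u → HasCompactSupport u →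
      κ * ∫ x, gradSq u x ≤ ∫ x, (gradSq u x + b * ‖u x‖ ^ 2 / ‖x‖ ^ 2) := by
  obtain ⟨Λ, hΛ⟩ : ∃ Λ : ℝ, Λ = ((N : ℝ) - 2) ^ 2 / 4 := ⟨_, rfl⟩
  have hΛ0 : 0 < Λ := by
    have : (0 : ℝ) < N - 2 := by
      have : (3 : ℝ) ≤ N := by exact_mod_cast hN
      linarith
    rw [hΛ]; positivity
  rw [← hΛ] at hb
  have hbΛ : -1 < b / Λ := by rw [lt_div_iff₀ hΛ0]; linarith
  refine ⟨min 1 (1 + b / Λ), lt_min one_pos (by linarith), fun u hu hc => ?_⟩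
  have hardy := hardy_inequality hN hu hc
  have hgrad : 0 ≤ ∫ x, gradSq u x := integral_nonneg (gradSq_nonneg u)
  have hpot : 0 ≤ ∫ x, ‖u x‖ ^ 2 / ‖x‖ ^ 2 := integral_nonneg fun x => by positivity
  simp only [mul_div_assoc]
  rw [integral_add (integrable_gradSq hu hc)
    ((integrable_norm_sq_div_norm_sq hN hu.continuous hc).const_mul b), integral_const_mul]
  rw [← hΛ, ← le_div_iff₀' hΛ0] at hardy
  rcases le_or_gt 0 b with hb0 | hb0
  · calc min 1 (1 + b / Λ) * ∫ x, gradSq u x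
        ≤ 1 * ∫ x, gradSq u x := by gcongr; exact min_le_left _ _
      _ ≤ (∫ x, gradSq u x) + b * ∫ x, ‖u x‖ ^ 2 / ‖x‖ ^ 2 := by
          rw [one_mul]; exact le_add_of_nonneg_right (by positivity)
  · calc min 1 (1 + b / Λ) * ∫ x, gradSq u x
        ≤ (1 + b / Λ) * ∫ x, gradSq u x := by gcongr; exact min_le_right _ _
      _ = (∫ x, gradSq u x) + b * ((∫ x, gradSq u x) / Λ) := by ring
      _ ≤ (∫ x, gradSq u x) + b * ∫ x, ‖u x‖ ^ 2 / ‖x‖ ^ 2 := by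
          linarith [mul_le_mul_of_nonpos_left hardy hb0.le]

end Hardy

theorem mass_subcritical_apriori_bound_general (N : ℕ) (hN : 3 ≤ N) (α p b : ℝ)
    (hα0 : 0 < α) (hαN : α < N) (hb : -(((N : ℝ) - 2) ^ 2 / 4) < b)
    (hp1 : ((N : ℝ) + α) / N < p) (hp2 : p < 1 + (2 + α) / N) (M E₀ : ℝ) :
    ∃ B > (0 : ℝ), ∀ u : EuclideanSpace ℝ (Fin N) → ℂ,
      ContDiff ℝ 1 u → HasCompactSupport u → (∫ x, ‖u x‖ ^ 2) ≤ M →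
      1 / 2 * (∫ x, (gradSq u x + b * ‖u x‖ ^ 2 / ‖x‖ ^ 2))
          - 1 / (2 * p) * choquardTerm N α p u ≤ E₀ →
      (∫ x, (gradSq u x + b * ‖u x‖ ^ 2 / ‖x‖ ^ 2)) ≤ B := by
  have hp0 : 0 < p := lt_trans (by positivity) hp1
  obtain ⟨κ, hκ, coercive⟩ := exists_mul_integral_gradSq_le ℂ hN hb
  obtain ⟨B₀, hB₀⟩ := exists_choquardTerm_le_mul_add hN hα0 hαN hp1 hp2 M
    (ε := p * κ / 2) (by positivity)
  refine ⟨max 1 (4 * E₀ + 2 * B₀ / p), by positivity, fun u hu hc hM hE => le_max_of_le_right ?_⟩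
  have hform := coercive u hu hc
  set H := ∫ x, (gradSq u x + b * ‖u x‖ ^ 2 / ‖x‖ ^ 2)
  have absorb : 1 / (2 * p) * choquardTerm N α p u ≤ 1 / 4 * H + B₀ / (2 * p) := calc
    1 / (2 * p) * choquardTerm N α p u
        ≤ 1 / (2 * p) * (p * κ / 2 * (∫ x, gradSq u x) + B₀) := by
          gcongr
          exact hB₀ u hu hc hM
    _ = 1 / 4 * (κ * ∫ x, gradSq u x) + B₀ / (2 * p) := by field_simp; ring
    _ ≤ 1 / 4 * H + B₀ / (2 * p) := by gcongr
  calc H ≤ 4 * (E₀ + B₀ / (2 * p)) := by linarith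
    _ = 4 * E₀ + 2 * B₀ / p := by field_simp; ring

/-- A priori bound in the mass-subcritical focusing case: bounded mass and
bounded Choquard energy imply a bound on the quadratic form of `𝓛_b`. -/
theorem mass_subcritical_apriori_bound (N : ℕ) (hN : 3 ≤ N) (α p b : ℝ)
    (hα0 : 0 < α) (hαN : α < N) (hb : -(((N : ℝ) - 2) ^ 2 / 4) < b)
    (hp1 : ((N : ℝ) + α) / N < p) (hp2 : p < 1 + (2 + α) / N) :
    ∀ M₀ > (0 : ℝ), ∀ E₀ : ℝ, ∃ B > (0 : ℝ),
      ∀ u : EuclideanSpace ℝ (Fin N) → ℂ,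
        ContDiff ℝ (⊤ : ℕ∞) u → HasCompactSupport u →
        (∫ x, ‖u x‖ ^ 2) ≤ M₀ ^ 2 →
        1 / 2 * (∫ x, (gradSq u x + b * ‖u x‖ ^ 2 / ‖x‖ ^ 2))
            - 1 / (2 * p) * choquardTerm N α p u ≤ E₀ →
        (∫ x, (gradSq u x + b * ‖u x‖ ^ 2 / ‖x‖ ^ 2)) ≤ B := by
  intro M₀ _ E₀
  obtain ⟨B, hB, hbound⟩ :=
    mass_subcritical_apriori_bound_general N hN α p b hα0 hαN hb hp1 hp2 (M₀ ^ 2) E₀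
  exact ⟨B, hB, fun u hu => hbound u (hu.of_le (by exact_mod_cast le_top))⟩
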